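/- Let W, J1, J2, X1, X2, Y1, Y2, Z1, Z2 be random variables with values in finite sets on a common probability space. Suppose: (i) Y1 and Y2 are each deterministic functions of (X1, X2); (ii) Z1 is a deterministic function of X1 and also a deterministic function of (Y1, X2); (iii) Z2 is a deterministic function of X2 and also a deterministic function of (Y1, X1); (iv) H(X1 | (J1, J2, X2)) = H(X1 | J1) and H(X2 | (J1, J2, X1)) = H(X2 | J2); and (v) I(W; Y1 | (J1, J2)) = 0. Then 3·I(W; Y1) − I(W; Y2) ≤ H(J1) + H(J2) + 2·H(Y1) − H(Y2) + H(X1 | Z1) + H(X2 | Z2). -/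

import Mathlib

/-!
The inequality is of Shannon type: it follows from nonnegativity of entropy, monotonicity
`H(Z) ≤ H(X)` for `Z` a function of `X` (`H_mono`), and submodularity (`H_submod`), which is a
repackaging of `I(X;Y|Z) ≥ 0` (`condMutInfo_nonneg`). Write `J = (J1, J2)`.

* As `Y1` and `Y2` are functions of `(X1, X2)`,
  `I(W;Y1) - I(W;Y2) ≤ I(W;Y1|Y2) ≤ H(Y1|Y2) ≤ H(X1,X2) - H(Y2)`.
* As `I(W;Y1|J) = 0`, `I(W;Y1) ≤ I(J;Y1) = H(Y1) - H(Y1|J)`; this is used twice.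
* `H(X1,X2) ≤ H(X1,J1) + H(X2,J2) = H(J1) + H(J2) + H(X1|J1) + H(X2|J2)`.
* As `Z1` is a function of `(Y1, X2)`,
  `H(X1|J1) = H(X1|J,X2) ≤ H(Z1|J,X2) + H(X1|Z1) ≤ H(Y1|J) + H(X1|Z1)`, and symmetrically for `X2`.

Adding these up, the two terms `H(Y1|J)` cancel.
-/

/-!
Shannon entropy, conditional entropy, and mutual information for discrete random
variables defined on a common probability space modelled by a `PMF`.
The logarithm is the natural logarithm and `0 log 0 = 0` (via `Real.negMulLog`).
-/

namespace DiamondWiretap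

/-- Shannon entropy `H(X)` of a random variable `X` on the probability space `(Ω, p)`. -/
noncomputable def H {Ω S : Type*} (p : PMF Ω) (X : Ω → S) : ℝ :=
  ∑' s : S, Real.negMulLog ((p.map X) s).toReal

/-- Joint entropy `H(X, Y)`. -/
noncomputable def H2 {Ω S T : Type*} (p : PMF Ω) (X : Ω → S) (Y : Ω → T) : ℝ :=
  H p (fun ω => (X ω, Y ω))

/-- Conditional entropy `H(X | Y) = H(X, Y) - H(Y)`. -/
noncomputable def condEnt {Ω S T : Type*} (p : PMF Ω) (X : Ω → S) (Y : Ω → T) : ℝ :=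
  H2 p X Y - H p Y

/-- Mutual information `I(X; Y) = H(X) + H(Y) - H(X, Y)`. -/
noncomputable def mutInfo {Ω S T : Type*} (p : PMF Ω) (X : Ω → S) (Y : Ω → T) : ℝ :=
  H p X + H p Y - H2 p X Y

/-- Conditional mutual information `I(X; Y | Z) = H(X,Z) + H(Y,Z) - H(X,Y,Z) - H(Z)`. -/
noncomputable def condMutInfo {Ω S T U : Type*} (p : PMF Ω)
    (X : Ω → S) (Y : Ω → T) (Z : Ω → U) : ℝ :=
  H2 p X Z + H2 p Y Z - H p (fun ω => (X ω, Y ω, Z ω)) - H p Z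

/-- `Z` is almost surely a deterministic function of `X`,
i.e. `Z = φ ∘ X` on the support of `p` for some function `φ`. -/
def IsDetFnOf {Ω S T : Type*} (p : PMF Ω) (Z : Ω → T) (X : Ω → S) : Prop :=
  ∃ φ : S → T, ∀ ω ∈ p.support, Z ω = φ (X ω)

end DiamondWiretap

open DiamondWiretap

namespace DiamondWiretap

lemma H_eq_sum {Ω S : Type*} [Fintype S] (p : PMF Ω) (X : Ω → S) :
    H p X = ∑ s, Real.negMulLog ((p.map X) s).toReal := by
  rw [H, tsum_fintype]

lemma H_nonneg {Ω S : Type*} (p : PMF Ω) (X : Ω → S) : 0 ≤ H p X :=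
  tsum_nonneg fun s => Real.negMulLog_nonneg ENNReal.toReal_nonneg
    (by simpa using ENNReal.toReal_mono ENNReal.one_ne_top ((p.map X).coe_le_one s))

lemma toReal_map_comp {Ω S T : Type*} [Fintype S] [DecidableEq T] (p : PMF Ω) (X : Ω → S)
    (f : S → T) (t : T) :
    ((p.map (f ∘ X)) t).toReal = ∑ s with f s = t, ((p.map X) s).toReal := by
  rw [← PMF.map_comp, PMF.map_apply, tsum_fintype,
    ENNReal.toReal_sum (fun s _ => by split_ifs <;> first | exact PMF.apply_ne_top _ _ | simp), Finset.sum_filter]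
  refine Finset.sum_congr rfl fun s _ => ?_
  by_cases h : f s = t
  · simp [h]
  · simp [h, Ne.symm h]

/-- Subadditivity of `-x log x`: merging atoms decreases entropy. -/
lemma negMulLog_sum_le {S : Type*} (F : Finset S) (a : S → ℝ) (ha : ∀ s ∈ F, 0 ≤ a s) :
    Real.negMulLog (∑ s ∈ F, a s) ≤ ∑ s ∈ F, Real.negMulLog (a s) := by
  simp only [Real.negMulLog]
  rw [← Finset.sum_neg_distrib, Finset.sum_mul]
  refine Finset.sum_le_sum fun s hs => ?_
  rcases (ha s hs).eq_or_lt with h | h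
  · simp [← h]
  · have := Real.log_le_log h (Finset.single_le_sum ha hs)
    nlinarith

lemma H_comp_le {Ω S T : Type*} [Fintype S] [Fintype T] (p : PMF Ω) (X : Ω → S) (f : S → T) :
    H p (f ∘ X) ≤ H p X := by
  classical
  rw [H_eq_sum, H_eq_sum, ← Finset.sum_fiberwise Finset.univ f]
  refine Finset.sum_le_sum fun t _ => ?_
  rw [toReal_map_comp]
  exact negMulLog_sum_le _ _ fun _ _ => ENNReal.toReal_nonneg

/-- The law of a random variable only depends on its values on the support. -/
lemma map_congr_support {Ω S : Type*} (p : PMF Ω) {X Y : Ω → S}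
    (h : ∀ ω ∈ p.support, X ω = Y ω) : p.map X = p.map Y := by
  ext s
  rw [PMF.map_apply, PMF.map_apply]
  refine tsum_congr fun ω => ?_
  by_cases hω : ω ∈ p.support
  · rw [h ω hω]
  · rw [(PMF.apply_eq_zero_iff p ω).2 hω]; simp

lemma H_mono {Ω S T : Type*} [Fintype S] [Fintype T] {p : PMF Ω} {Z : Ω → T} {X : Ω → S}
    (h : IsDetFnOf p Z X) : H p Z ≤ H p X := by
  obtain ⟨f, hf⟩ := h
  have hZ : H p Z = H p (f ∘ X) := by
    rw [H, H, map_congr_support p (Y := f ∘ X) hf]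
  exact hZ ▸ H_comp_le p X f

/-- The bound `log r ≤ r - 1` at `r = b c / (a d)`, in a form that also covers `a = 0`. -/
lemma mul_log_le {a b c d : ℝ} (ha : 0 ≤ a) (hb : a ≤ b) (hc : a ≤ c) (hd : a ≤ d) :
    a * (Real.log b + Real.log c - Real.log a - Real.log d) ≤ b * c / d - a := by
  rcases ha.eq_or_lt with h | h
  · subst h
    have : 0 ≤ b * c / d := by positivity
    simpa using this
  · have hb' := h.trans_le hb
    have hc' := h.trans_le hc
    have hd' := h.trans_le hd
    have key := Real.log_le_sub_one_of_pos (x := b * c / (a * d)) (by positivity)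
    rw [Real.log_div (by positivity) (by positivity), Real.log_mul hb'.ne' hc'.ne',
      Real.log_mul h.ne' hd'.ne'] at key
    have h2 := mul_le_mul_of_nonneg_left key ha
    have h3 : a * (b * c / (a * d) - 1) = b * c / d - a := by field_simp
    linarith

/-- Nonnegativity of conditional mutual information, for a nonnegative weight `q` on a
product of three finite types. -/
lemma sum_negMulLog_submod {A B C : Type*} [Fintype A] [Fintype B] [Fintype C]
    (q : A → B → C → ℝ) (hq : ∀ x y z, 0 ≤ q x y z) :
    (∑ x, ∑ y, ∑ z, Real.negMulLog (q x y z)) + ∑ z, Real.negMulLog (∑ x, ∑ y, q x y z)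
      ≤ (∑ x, ∑ z, Real.negMulLog (∑ y, q x y z)) +
        ∑ y, ∑ z, Real.negMulLog (∑ x, q x y z) := by
  set b : A → C → ℝ := fun x z => ∑ y, q x y z with hb
  set c : B → C → ℝ := fun y z => ∑ x, q x y z with hc
  set d : C → ℝ := fun z => ∑ x, ∑ y, q x y z with hd
  have hqb : ∀ x y z, q x y z ≤ b x z := fun x y z =>
    Finset.single_le_sum (f := fun y => q x y z) (fun y _ => hq x y z) (Finset.mem_univ y)
  have hqc : ∀ x y z, q x y z ≤ c y z := fun x y z =>
    Finset.single_le_sum (f := fun x => q x y z) (fun x _ => hq x y z) (Finset.mem_univ x)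
  have hb0 : ∀ x z, 0 ≤ b x z := fun x z => Finset.sum_nonneg fun y _ => hq x y z
  have hbd : ∀ x z, b x z ≤ d z := fun x z =>
    Finset.single_le_sum (f := fun x => b x z) (fun x _ => hb0 x z) (Finset.mem_univ x)
  have hdc : ∀ z, ∑ y, c y z = d z := fun z => Finset.sum_comm
  have hfac : ∀ z, ∑ x, ∑ y, b x z * c y z / d z = d z := by
    intro z
    have : ∑ x, ∑ y, b x z * c y z / d z = d z * d z / d z := by
      simp_rw [← Finset.sum_div, ← Finset.mul_sum, hdc, ← Finset.sum_mul]
      rfl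
    rw [this, mul_self_div_self]
  have hpt : ∀ z, ∑ x, ∑ y, q x y z *
      (Real.log (b x z) + Real.log (c y z) - Real.log (q x y z) - Real.log (d z)) ≤ 0 := by
    intro z
    calc _ ≤ ∑ x, ∑ y, (b x z * c y z / d z - q x y z) :=
          Finset.sum_le_sum fun x _ => Finset.sum_le_sum fun y _ =>
            mul_log_le (hq x y z) (hqb x y z) (hqc x y z) ((hqb x y z).trans (hbd x z))
      _ = 0 := by
          simp_rw [Finset.sum_sub_distrib]
          rw [hfac z]
          exact sub_self _
  have hsum := Finset.sum_nonpos fun z (_ : z ∈ Finset.univ) => hpt z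
  have e1 : ∑ x, ∑ y, ∑ z, Real.negMulLog (q x y z)
      = ∑ z, ∑ x, ∑ y, -(q x y z * Real.log (q x y z)) := by
    simp only [Real.negMulLog, neg_mul]
    rw [Finset.sum_comm (s := (Finset.univ : Finset C))]
    exact Finset.sum_congr rfl fun x _ => Finset.sum_comm
  have e2 : ∑ z, Real.negMulLog (d z) = ∑ z, ∑ x, ∑ y, -(q x y z * Real.log (d z)) := by
    refine Finset.sum_congr rfl fun z _ => ?_
    simp only [Real.negMulLog, Finset.sum_neg_distrib, neg_mul, ← Finset.sum_mul, hd]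
  have e3 : ∑ x, ∑ z, Real.negMulLog (b x z)
      = ∑ z, ∑ x, ∑ y, -(q x y z * Real.log (b x z)) := by
    rw [Finset.sum_comm]
    refine Finset.sum_congr rfl fun z _ => Finset.sum_congr rfl fun x _ => ?_
    simp only [Real.negMulLog, Finset.sum_neg_distrib, neg_mul, ← Finset.sum_mul, hb]
  have e4 : ∑ y, ∑ z, Real.negMulLog (c y z)
      = ∑ z, ∑ x, ∑ y, -(q x y z * Real.log (c y z)) := by
    rw [Finset.sum_comm]
    refine Finset.sum_congr rfl fun z _ => ?_
    rw [Finset.sum_comm]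
    refine Finset.sum_congr rfl fun y _ => ?_
    simp only [Real.negMulLog, Finset.sum_neg_distrib, neg_mul, ← Finset.sum_mul, hc]
  have e5 : ∀ x y z, q x y z *
      (Real.log (b x z) + Real.log (c y z) - Real.log (q x y z) - Real.log (d z))
      = -(q x y z * Real.log (q x y z)) + -(q x y z * Real.log (d z))
        - -(q x y z * Real.log (b x z)) - -(q x y z * Real.log (c y z)) := by
    intro x y z; ring
  simp_rw [e5, Finset.sum_sub_distrib, Finset.sum_add_distrib] at hsum
  rw [e1, e2, e3, e4]
  linarith

lemma condMutInfo_nonneg {Ω A B C : Type*} [Fintype A] [Fintype B] [Fintype C]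
    (p : PMF Ω) (X : Ω → A) (Y : Ω → B) (Z : Ω → C) : 0 ≤ condMutInfo p X Y Z := by
  classical
  set V : Ω → A × B × C := fun ω => (X ω, Y ω, Z ω) with hV
  have key := sum_negMulLog_submod (fun x y z => ((p.map V) (x, y, z)).toReal)
    fun _ _ _ => ENNReal.toReal_nonneg
  have m1 : ∀ x z, ((p.map fun ω => (X ω, Z ω)) (x, z)).toReal
      = ∑ y, ((p.map V) (x, y, z)).toReal := by
    intro x z
    have := toReal_map_comp p V (fun v => (v.1, v.2.2)) (x, z)
    simp only [Finset.sum_filter, Fintype.sum_prod_type, Prod.mk.injEq, ite_and] at this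
    rw [Finset.sum_eq_single x (by intro b _ h; simp [h]) (by simp)] at this
    simpa using this
  have m2 : ∀ y z, ((p.map fun ω => (Y ω, Z ω)) (y, z)).toReal
      = ∑ x, ((p.map V) (x, y, z)).toReal := by
    intro y z
    have := toReal_map_comp p V (fun v => v.2) (y, z)
    simp only [Finset.sum_filter, Fintype.sum_prod_type] at this
    refine this.trans (Finset.sum_congr rfl fun x _ => ?_)
    rw [Finset.sum_eq_single y (by intro b _ h; simp [h]) (by simp)]
    simp
  have m3 : ∀ z, ((p.map Z) z).toReal = ∑ x, ∑ y, ((p.map V) (x, y, z)).toReal := by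
    intro z
    have := toReal_map_comp p V (fun v => v.2.2) z
    simp only [Finset.sum_filter, Fintype.sum_prod_type] at this
    simpa using this
  simp only [← m3] at key
  simp only [← m1, ← m2] at key
  simp only [condMutInfo, H2, H_eq_sum, Fintype.sum_prod_type]
  linarith

/-- Submodularity of entropy: if `C` is a function of `A` and of `B`, and `D` is a function of
`(A, B)`, then `H(D) + H(C) ≤ H(A) + H(B)`. -/
lemma H_submod {Ω SA SB SC SD : Type*} [Fintype SA] [Fintype SB] [Fintype SC] [Fintype SD]
    {p : PMF Ω} {A : Ω → SA} {B : Ω → SB} {C : Ω → SC} {D : Ω → SD}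
    (hCA : IsDetFnOf p C A) (hCB : IsDetFnOf p C B)
    (hD : IsDetFnOf p D (fun ω => (A ω, B ω))) :
    H p D + H p C ≤ H p A + H p B := by
  have h0 := condMutInfo_nonneg p A B C
  simp only [condMutInfo, H2] at h0
  obtain ⟨f, hf⟩ := hCA
  obtain ⟨g, hg⟩ := hCB
  obtain ⟨k, hk⟩ := hD
  have h1 : H p (fun ω => (A ω, C ω)) ≤ H p A :=
    H_mono ⟨fun a => (a, f a), fun ω hω => by simp [hf ω hω]⟩
  have h2 : H p (fun ω => (B ω, C ω)) ≤ H p B :=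
    H_mono ⟨fun b => (b, g b), fun ω hω => by simp [hg ω hω]⟩
  have h3 : H p D ≤ H p (fun ω => (A ω, B ω, C ω)) :=
    H_mono ⟨fun v => k (v.1, v.2.1), fun ω hω => hk ω hω⟩
  linarith

end DiamondWiretap

/-- core entropy inequality of the converse proof of Theorem 2
(no eavesdropper's CSI):
`3·I(W; Y1) − I(W; Y2) ≤ H(J1) + H(J2) + 2·H(Y1) − H(Y2) + H(X1 | Z1) + H(X2 | Z2)`. -/
theorem stmt7 {Ω SW SJ1 SJ2 S1 S2 T1 T2 U1 U2 : Type*}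
    [Fintype SW] [Fintype SJ1] [Fintype SJ2] [Fintype S1] [Fintype S2]
    [Fintype T1] [Fintype T2] [Fintype U1] [Fintype U2]
    (p : PMF Ω) (W : Ω → SW) (J1 : Ω → SJ1) (J2 : Ω → SJ2)
    (X1 : Ω → S1) (X2 : Ω → S2) (Y1 : Ω → T1) (Y2 : Ω → T2)
    (Z1 : Ω → U1) (Z2 : Ω → U2)
    (hY1 : IsDetFnOf p Y1 (fun ω => (X1 ω, X2 ω)))
    (hY2 : IsDetFnOf p Y2 (fun ω => (X1 ω, X2 ω)))
    (hZ1a : IsDetFnOf p Z1 X1)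
    (hZ1b : IsDetFnOf p Z1 (fun ω => (Y1 ω, X2 ω)))
    (hZ2a : IsDetFnOf p Z2 X2)
    (hZ2b : IsDetFnOf p Z2 (fun ω => (Y1 ω, X1 ω)))
    (hMarkov1 : condEnt p X1 (fun ω => (J1 ω, J2 ω, X2 ω)) = condEnt p X1 J1)
    (hMarkov2 : condEnt p X2 (fun ω => (J1 ω, J2 ω, X1 ω)) = condEnt p X2 J2)
    (hMarkovW : condMutInfo p W Y1 (fun ω => (J1 ω, J2 ω)) = 0) :
    3 * mutInfo p W Y1 - mutInfo p W Y2
      ≤ H p J1 + H p J2 + 2 * H p Y1 - H p Y2 + condEnt p X1 Z1 + condEnt p X2 Z2 := by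
  obtain ⟨f1, hf1⟩ := hY1
  obtain ⟨f2, hf2⟩ := hY2
  obtain ⟨g1, hg1⟩ := hZ1b
  obtain ⟨g2, hg2⟩ := hZ2b
  simp only [mutInfo, condEnt, condMutInfo, H2] at *
  -- `I(W;Y1) - I(W;Y2) ≤ H(X1,X2) - H(Y2)`
  have a1 : H p (fun ω => (W ω, Y2 ω)) + H p Y1
      ≤ H p (fun ω => (W ω, Y1 ω)) + H p (fun ω => (X1 ω, X2 ω)) :=
    H_submod ⟨fun v => v.2, fun _ _ => rfl⟩ ⟨f1, hf1⟩
      ⟨fun v => (v.1.1, f2 v.2), fun ω hω => by simp [hf2 ω hω]⟩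
  -- `H(W|Y1) ≥ H(W|Y1,J)`, which with `I(W;Y1|J) = 0` gives `I(W;Y1) ≤ I(J;Y1)`
  have a2 : H p (fun ω => (W ω, Y1 ω, J1 ω, J2 ω)) + H p W
      ≤ H p (fun ω => (W ω, Y1 ω)) + H p (fun ω => (W ω, J1 ω, J2 ω)) :=
    H_submod ⟨fun v => v.1, fun _ _ => rfl⟩ ⟨fun v => v.1, fun _ _ => rfl⟩
      ⟨fun v => (v.1.1, v.1.2, v.2.2), fun _ _ => rfl⟩
  -- `H(X1,X2) ≤ H(X1,J1) + H(X2,J2)`: submodularity over a constant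
  have a3 : H p (fun ω => (X1 ω, X2 ω)) + H p (fun _ => ())
      ≤ H p (fun ω => (X1 ω, J1 ω)) + H p (fun ω => (X2 ω, J2 ω)) :=
    H_submod ⟨fun _ => (), fun _ _ => rfl⟩ ⟨fun _ => (), fun _ _ => rfl⟩
      ⟨fun v => (v.1.1, v.2.1), fun _ _ => rfl⟩
  have a4 := H_nonneg p (fun _ => ())
  -- `H(X1|J,X2) ≤ H(Y1|J,X2) + H(X1|Z1)`, as `(Y1, X2)` determines `Z1`
  have b1 : H p (fun ω => (X1 ω, J1 ω, J2 ω, X2 ω)) + H p Z1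
      ≤ H p (fun ω => (Y1 ω, J1 ω, J2 ω, X2 ω)) + H p (fun ω => (X1 ω, Z1 ω)) :=
    H_submod ⟨fun v => g1 (v.1, v.2.2.2), hg1⟩ ⟨fun v => v.2, fun _ _ => rfl⟩
      ⟨fun v => (v.2.1, v.1.2), fun _ _ => rfl⟩
  -- `H(Y1|J,X2) ≤ H(Y1|J)`
  have b2 : H p (fun ω => (Y1 ω, J1 ω, J2 ω, X2 ω)) + H p (fun ω => (J1 ω, J2 ω))
      ≤ H p (fun ω => (Y1 ω, J1 ω, J2 ω)) + H p (fun ω => (J1 ω, J2 ω, X2 ω)) :=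
    H_submod ⟨fun v => v.2, fun _ _ => rfl⟩ ⟨fun v => (v.1, v.2.1), fun _ _ => rfl⟩
      ⟨fun v => (v.1.1, v.2), fun _ _ => rfl⟩
  have c1 : H p (fun ω => (X2 ω, J1 ω, J2 ω, X1 ω)) + H p Z2
      ≤ H p (fun ω => (Y1 ω, J1 ω, J2 ω, X1 ω)) + H p (fun ω => (X2 ω, Z2 ω)) :=
    H_submod ⟨fun v => g2 (v.1, v.2.2.2), hg2⟩ ⟨fun v => v.2, fun _ _ => rfl⟩
      ⟨fun v => (v.2.1, v.1.2), fun _ _ => rfl⟩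
  have c2 : H p (fun ω => (Y1 ω, J1 ω, J2 ω, X1 ω)) + H p (fun ω => (J1 ω, J2 ω))
      ≤ H p (fun ω => (Y1 ω, J1 ω, J2 ω)) + H p (fun ω => (J1 ω, J2 ω, X1 ω)) :=
    H_submod ⟨fun v => v.2, fun _ _ => rfl⟩ ⟨fun v => (v.1, v.2.1), fun _ _ => rfl⟩
      ⟨fun v => (v.1.1, v.2), fun _ _ => rfl⟩
  linarith
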